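/- Let A and B be nonempty compact subsets of the Euclidean plane with hausdorffDist A B = 1, and let α, β ∈ [0,1]. Then the dilation morph is 1-Lipschitz in the time parameter: hausdorffDist (S_α(A,B)) (S_β(A,B)) ≤ |β − α|. -/

import Mathlib

open Metric Set Pointwise

noncomputable section

/-- The Euclidean plane. -/
abbrev Plane := EuclideanSpace ℝ (Fin 2)

/-- The Voronoi morph: each point of `A` is moved a fraction `α` of the way towards a
nearest point of `B`, and each point of `B` is moved a fraction `1 - α` of the way towards
a nearest point of `A`; all nearest points are used when they are not unique. -/
def voronoiMorph (A B : Set Plane) (α : ℝ) : Set Plane :=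
  {p | ∃ a ∈ A, ∃ b ∈ B, dist a b = Metric.infDist a B ∧ p = (1 - α) • a + α • b} ∪
  {p | ∃ b ∈ B, ∃ a ∈ A, dist b a = Metric.infDist b A ∧ p = (1 - α) • a + α • b}

/-- The dilation morph `S_α(A,B) = (A ⊕ D_α) ∩ (B ⊕ D_{1-α})`. -/
def dilationMorph (A B : Set Plane) (α : ℝ) : Set Plane :=
  (A + Metric.closedBall (0 : Plane) α) ∩ (B + Metric.closedBall (0 : Plane) (1 - α))

/-- The closing of a set by a disk of radius `φ`: dilation followed by erosion. -/
def closing (X : Set Plane) (φ : ℝ) : Set Plane :=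
  ((X + Metric.closedBall (0 : Plane) φ)ᶜ + Metric.closedBall (0 : Plane) φ)ᶜ

/-- The mixed morph `M_{α,φ}(A,B)`. -/
def mixedMorph (A B : Set Plane) (α φ : ℝ) : Set Plane :=
  closing (voronoiMorph A B α) φ ∩ dilationMorph A B α

theorem mem_dilationMorph_iff (A B : Set Plane) (α : ℝ) (x : Plane) :
    x ∈ dilationMorph A B α ↔
      (∃ a ∈ A, dist x a ≤ α) ∧ (∃ b ∈ B, dist x b ≤ 1 - α) := by
  have key : ∀ (C : Set Plane) (r : ℝ),
      x ∈ C + Metric.closedBall (0 : Plane) r ↔ ∃ c ∈ C, dist x c ≤ r := by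
    intro C r
    rw [Set.mem_add]
    constructor
    · rintro ⟨c, hc, d, hd, rfl⟩
      refine ⟨c, hc, ?_⟩
      rw [mem_closedBall_zero_iff] at hd
      rw [dist_eq_norm]
      simpa using hd
    · rintro ⟨c, hc, hd⟩
      refine ⟨c, hc, x - c, ?_, by abel⟩
      rw [mem_closedBall_zero_iff, ← dist_eq_norm]
      exact hd
  unfold dilationMorph
  rw [Set.mem_inter_iff, key, key]

theorem dilationMorph_symm (A B : Set Plane) (α : ℝ) :
    dilationMorph A B α = dilationMorph B A (1 - α) := by
  unfold dilationMorph
  rw [sub_sub_cancel, Set.inter_comm]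

/-- Forward step: a point of `S_α` moves towards `B` by `β - α` to reach `S_β`. -/
theorem dilationMorph_step (A B : Set Plane) {α β : ℝ} (h : α ≤ β) (hβ : β ≤ 1)
    {x : Plane} (hx : x ∈ dilationMorph A B α) :
    ∃ y ∈ dilationMorph A B β, dist x y ≤ β - α := by
  rw [mem_dilationMorph_iff] at hx
  obtain ⟨⟨a, ha, hxa⟩, b, hb, hxb⟩ := hx
  obtain ⟨y, hxy, hyb⟩ := exists_dist_le_le (x := x) (z := b) (δ := β - α) (ε := 1 - β)
    (by linarith) (by linarith) (by linarith)
  have h1 := dist_triangle y x a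
  rw [dist_comm y x] at h1
  refine ⟨y, (mem_dilationMorph_iff A B β y).2 ⟨⟨a, ha, ?_⟩, b, hb, ?_⟩, ?_⟩ <;> linarith

theorem dilationMorph_near (A B : Set Plane) {α β : ℝ} 
    (hβ : 0 ≤ β) (hβ' : β ≤ 1) {x : Plane} (hx : x ∈ dilationMorph A B α) :
    ∃ y ∈ dilationMorph A B β, dist x y ≤ |β - α| := by
  rcases le_total α β with h | h
  · rw [abs_of_nonneg (by linarith)]
    exact dilationMorph_step A B h hβ' hx
  · rw [abs_of_nonpos (by linarith)]
    rw [dilationMorph_symm] at hx ⊢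
    obtain ⟨y, hy, hd⟩ := dilationMorph_step B A (β := 1 - β) (by linarith) (by linarith) hx
    exact ⟨y, hy, by linarith⟩

theorem dilationMorph_lipschitz (A B : Set Plane) (hAne : A.Nonempty) (hBne : B.Nonempty)
    (hA : IsCompact A) (hB : IsCompact B) (hAB : Metric.hausdorffDist A B = 1)
    (α β : ℝ) (hα : α ∈ Set.Icc (0 : ℝ) 1) (hβ : β ∈ Set.Icc (0 : ℝ) 1) :
    Metric.hausdorffDist (dilationMorph A B α) (dilationMorph A B β) ≤ |β - α| := by
  refine Metric.hausdorffDist_le_of_mem_dist (abs_nonneg _) ?_ ?_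
  · intro x hx
    exact dilationMorph_near A B hβ.1 hβ.2 hx
  · intro x hx
    rw [abs_sub_comm]
    exact dilationMorph_near A B hα.1 hα.2 hx
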